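/- Let $n, m \in \mathbb{N}$ with $m + 1 < n$. Given $a_J, a_1, \dots, a_m \in \mathbb{R}$, $b_J, b_1, \dots, b_m \in \mathbb{R}^n$ and $c_J, c_1, \dots, c_m \in \mathbb{R}$, consider the S-QCQP problem: minimize $J(x) = a_J\|x\|^2 + 2 b_J^T x + c_J$ over $x \in \mathbb{R}^n$ subject to $f_k(x) = a_k\|x\|^2 + 2 b_k^T x + c_k \le 0$ for $k = 1, \dots, m$, where $\|\cdot\|$ is the Euclidean norm. Assume there exists $\gamma' \in \mathbb{R}^m$ with $\gamma'_k \ge 0$ for all $k$, $\gamma' \ne 0$, such that $a_J + \sum_{k=1}^m \gamma'_k a_k \ge 0$; let $x^*$ be a global minimizer of the S-QCQP; and assume there exists $x_0 \in \mathbb{R}^n$ with $f_k(x_0) < 0$ for all $k = 1, \dots, m$. Then: (1) The Shor SDP relaxation of the S-QCQP is exact: the infimum over pairs $(x, X) \in \mathbb{R}^n \times \mathrm{Sym}(n)$, where $\mathrm{Sym}(n)$ is the set of symmetric real $n \times n$ matrices, of $a_J \operatorname{Tr}(X) + 2 b_J^T x + c_J$ subject to $a_k \operatorname{Tr}(X)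 + 2 b_k^T x + c_k \le 0$ for $k = 1, \dots, m$ and $X - x x^T$ positive semidefinite, equals $J(x^*)$, and it is attained at $(x^*, x^* (x^*)^T)$. (2) The diagonal convex relaxation of the S-QCQP is exact: the infimum over pairs $(x, y) \in \mathbb{R}^n \times \mathbb{R}^n$ of $a_J \sum_{i=1}^n y_i + 2 b_J^T x + c_J$ subject to $a_k \sum_{i=1}^n y_i + 2 b_k^T x + c_k \le 0$ for $k = 1, \dots, m$ and $x_i^2 - y_i \le 0$ for $i = 1, \dots, n$, equals $J(x^*)$, and it is attained at $(x^*, y^*)$ with $y^*_i = (x^*_i)^2$ for all $i$. -/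

import Mathlib

open Matrix

/-- Data of an S-QCQP in `ℝⁿ` with `m` constraints: minimize
`aJ xᵀx + 2 bJᵀx + cJ` subject to `a k xᵀx + 2 (b k)ᵀx + c k ≤ 0` for all `k`. -/
structure SQCQP (n m : ℕ) where
  aJ : ℝ
  bJ : Fin n → ℝ
  cJ : ℝ
  a : Fin m → ℝ
  b : Fin m → Fin n → ℝ
  c : Fin m → ℝ

namespace SQCQP

variable {n m : ℕ}

/-- The objective `J(x) = aJ ‖x‖² + 2 bJᵀx + cJ`, where `‖x‖² = xᵀx`. -/
def J (P : SQCQP n m) (x : Fin n → ℝ) : ℝ :=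
  P.aJ * (x ⬝ᵥ x) + 2 * (P.bJ ⬝ᵥ x) + P.cJ

/-- The constraint functions `f k x = a k ‖x‖² + 2 (b k)ᵀx + c k`. -/
def f (P : SQCQP n m) (k : Fin m) (x : Fin n → ℝ) : ℝ :=
  P.a k * (x ⬝ᵥ x) + 2 * (P.b k ⬝ᵥ x) + P.c k

def Feasible (P : SQCQP n m) (x : Fin n → ℝ) : Prop :=
  ∀ k, P.f k x ≤ 0

def IsGlobalMinimizer (P : SQCQP n m) (x : Fin n → ℝ) : Prop :=
  P.Feasible x ∧ ∀ z, P.Feasible z → P.J x ≤ P.J z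

/-- Objective of the Shor SDP relaxation, with the constant term of `J` kept. -/
def shorObj (P : SQCQP n m) (x : Fin n → ℝ) (X : Matrix (Fin n) (Fin n) ℝ) : ℝ :=
  P.aJ * X.trace + 2 * (P.bJ ⬝ᵥ x) + P.cJ

/-- Feasibility for the Shor SDP relaxation; `vecMulVec x x` is `x xᵀ`. -/
def ShorFeasible (P : SQCQP n m) (x : Fin n → ℝ) (X : Matrix (Fin n) (Fin n) ℝ) : Prop :=
  X.IsSymm ∧ (∀ k, P.a k * X.trace + 2 * (P.b k ⬝ᵥ x) + P.c k ≤ 0) ∧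
    (X - vecMulVec x x).PosSemidef

def IsShorMinimizer (P : SQCQP n m) (x : Fin n → ℝ) (X : Matrix (Fin n) (Fin n) ℝ) : Prop :=
  P.ShorFeasible x X ∧ ∀ z Z, P.ShorFeasible z Z → P.shorObj x X ≤ P.shorObj z Z

/-- The set of objective values of the Shor SDP relaxation on its feasible pairs. -/
def shorValues (P : SQCQP n m) : Set ℝ :=
  {t | ∃ x X, P.ShorFeasible x X ∧ t = P.shorObj x X}

/-- Objective of the diagonal relaxation in the variables `x, y ∈ ℝⁿ`, in which
`y i` replaces `x i ^ 2`; the constant term of `J` is kept. -/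
def diagObj (P : SQCQP n m) (x y : Fin n → ℝ) : ℝ :=
  P.aJ * (∑ i, y i) + 2 * (P.bJ ⬝ᵥ x) + P.cJ

/-- Feasibility for the diagonal relaxation. -/
def DiagFeasible (P : SQCQP n m) (x y : Fin n → ℝ) : Prop :=
  (∀ k, P.a k * (∑ i, y i) + 2 * (P.b k ⬝ᵥ x) + P.c k ≤ 0) ∧ ∀ i, x i ^ 2 - y i ≤ 0

def IsDiagMinimizer (P : SQCQP n m) (x y : Fin n → ℝ) : Prop :=
  P.DiagFeasible x y ∧ ∀ z w, P.DiagFeasible z w → P.diagObj x y ≤ P.diagObj z w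

/-- The set of objective values of the diagonal relaxation on its feasible pairs. -/
def diagValues (P : SQCQP n m) : Set ℝ :=
  {t | ∃ x y, P.DiagFeasible x y ∧ t = P.diagObj x y}

end SQCQP

/-!
Both relaxations are at least as tight as the one in which `‖x‖²` is replaced by a scalar
`t ≥ ‖x‖²`: take for `t` the trace of `X`, respectively the sum of the `y i`. As `m < n`, some
nonzero `d` is orthogonal to all the `b k`, and `bJᵀd ≤ 0` after a change of sign. Moving from `x`
along `d` until the squared norm reaches `t` turns a feasible point `(x, t)` of the scalar
relaxation into a feasible point of the original problem whose objective value is no larger, so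
already the scalar relaxation is exact.
-/

theorem exists_ne_zero_mulVec_eq_zero_of_card_lt {R ι κ : Type*} [CommRing R] [Nontrivial R]
    [Fintype ι] [Fintype κ] (A : Matrix ι κ R) (hcard : Fintype.card ι < Fintype.card κ) :
    ∃ v, v ≠ 0 ∧ A *ᵥ v = 0 := by
  by_contra! h
  have hinj : Function.Injective A.mulVecLin :=
    (injective_iff_map_eq_zero _).mpr fun v hv => by_contra fun hv0 => h v hv0 hv
  exact hcard.not_ge (card_le_of_injective R A.mulVecLin hinj)

theorem exists_nonneg_norm_add_smul_eq {E : Type*} [SeminormedAddCommGroup E] [NormedSpace ℝ E]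
    {x v : E} (hv : ‖v‖ ≠ 0) {r : ℝ} (hr : ‖x‖ ≤ r) : ∃ s : ℝ, 0 ≤ s ∧ ‖x + s • v‖ = r := by
  let s₁ := (r + ‖x‖) / ‖v‖
  have hs₁ : 0 ≤ s₁ := div_nonneg (add_nonneg ((norm_nonneg x).trans hr) (norm_nonneg x))
    (norm_nonneg v)
  have hstart : ‖x + (0 : ℝ) • v‖ ≤ r := by simpa using hr
  have hend : r ≤ ‖x + s₁ • v‖ := calc
    r = ‖s₁ • v‖ - ‖x‖ := by
      rw [norm_smul_of_nonneg hs₁, div_mul_cancel₀ _ hv, add_sub_cancel_right]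
    _ ≤ ‖s₁ • v + x‖ := norm_sub_le_norm_add _ _
    _ = ‖x + s₁ • v‖ := by rw [add_comm]
  have hcont : Continuous fun s : ℝ => ‖x + s • v‖ := by fun_prop
  obtain ⟨s, hs, hsr⟩ := intermediate_value_Icc hs₁ hcont.continuousOn ⟨hstart, hend⟩
  exact ⟨s, hs.1, hsr⟩

section DotProduct

variable {ι : Type*} [Fintype ι]

theorem sum_sq_eq_dotProduct_self {R : Type*} [Semiring R] (x : ι → R) :
    ∑ i, x i ^ 2 = x ⬝ᵥ x := by
  simp only [dotProduct, sq]

theorem norm_toLp_sq_eq_dotProduct_self (x : ι → ℝ) : ‖WithLp.toLp 2 x‖ ^ 2 = x ⬝ᵥ x := by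
  rw [EuclideanSpace.real_norm_sq_eq, ← sum_sq_eq_dotProduct_self]

theorem exists_nonneg_dotProduct_self_add_smul_eq {x d : ι → ℝ} (hd : d ≠ 0) {t : ℝ}
    (ht : x ⬝ᵥ x ≤ t) : ∃ s : ℝ, 0 ≤ s ∧ (x + s • d) ⬝ᵥ (x + s • d) = t := by
  have hd_norm : ‖WithLp.toLp 2 d‖ ≠ 0 := by simpa using hd
  have hx_norm : ‖WithLp.toLp 2 x‖ ≤ √t :=
    Real.le_sqrt_of_sq_le ((norm_toLp_sq_eq_dotProduct_self x).trans_le ht)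
  have ht_nonneg : 0 ≤ t := (dotProduct_self_star_nonneg x).trans ht
  obtain ⟨s, hs, hs_norm⟩ := exists_nonneg_norm_add_smul_eq hd_norm hx_norm
  refine ⟨s, hs, ?_⟩
  rw [← norm_toLp_sq_eq_dotProduct_self, WithLp.toLp_add, WithLp.toLp_smul, hs_norm,
    Real.sq_sqrt ht_nonneg]

theorem dotProduct_add_smul_le {R : Type*} [CommRing R] [PartialOrder R] [IsOrderedRing R]
    {b d : ι → R} (hd : b ⬝ᵥ d ≤ 0) (x : ι → R) {s : R} (hs : 0 ≤ s) :
    b ⬝ᵥ (x + s • d) ≤ b ⬝ᵥ x := by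
  rw [dotProduct_add, dotProduct_smul, smul_eq_mul]
  exact add_le_of_nonpos_right (mul_nonpos_of_nonneg_of_nonpos hs hd)

end DotProduct

namespace SQCQP

variable {n m : ℕ} {P : SQCQP n m} {x y d : Fin n → ℝ} {t : ℝ} {X : Matrix (Fin n) (Fin n) ℝ}

/-- A nonzero direction along which neither the linear part of the objective nor that of any
constraint increases; the quadratic coefficients are ignored. -/
def IsLinearDescent (P : SQCQP n m) (d : Fin n → ℝ) : Prop :=
  d ≠ 0 ∧ P.bJ ⬝ᵥ d ≤ 0 ∧ ∀ k, P.b k ⬝ᵥ d ≤ 0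

/-- Objective of the scalar relaxation, in which the variable `t` replaces `‖x‖²`. -/
def scalarObj (P : SQCQP n m) (x : Fin n → ℝ) (t : ℝ) : ℝ :=
  P.aJ * t + 2 * (P.bJ ⬝ᵥ x) + P.cJ

/-- Feasibility for the scalar relaxation, in which `t = ‖x‖²` is weakened to `‖x‖² ≤ t`. -/
def ScalarFeasible (P : SQCQP n m) (x : Fin n → ℝ) (t : ℝ) : Prop :=
  (∀ k, P.a k * t + 2 * (P.b k ⬝ᵥ x) + P.c k ≤ 0) ∧ x ⬝ᵥ x ≤ t

theorem exists_isLinearDescent (P : SQCQP n m) (hmn : m < n) : ∃ d, P.IsLinearDescent d := by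
  obtain ⟨d, hd_ne, hd⟩ := exists_ne_zero_mulVec_eq_zero_of_card_lt (.of P.b) (by simpa using hmn)
  have hb : ∀ k, P.b k ⬝ᵥ d = 0 := congrFun hd
  rcases le_total (P.bJ ⬝ᵥ d) 0 with hJ | hJ
  · exact ⟨d, hd_ne, hJ, fun k => (hb k).le⟩
  · exact ⟨-d, neg_ne_zero.mpr hd_ne, by simpa using hJ, fun k => by simp [hb k]⟩

theorem ScalarFeasible.exists_feasible_J_le (h : P.ScalarFeasible x t)
    (hd : P.IsLinearDescent d) : ∃ z, P.Feasible z ∧ P.J z ≤ P.scalarObj x t := by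
  obtain ⟨hd_ne, hJ, hb⟩ := hd
  obtain ⟨s, hs, hst⟩ := exists_nonneg_dotProduct_self_add_smul_eq hd_ne h.2
  refine ⟨x + s • d, fun k => le_trans ?_ (h.1 k), ?_⟩
  · rw [f, hst]
    gcongr
    exact dotProduct_add_smul_le (hb k) x hs
  · rw [J, scalarObj, hst]
    gcongr
    exact dotProduct_add_smul_le hJ x hs

theorem IsGlobalMinimizer.J_le_scalarObj {z : Fin n → ℝ} (hx : P.IsGlobalMinimizer x)
    (hd : P.IsLinearDescent d) (h : P.ScalarFeasible z t) : P.J x ≤ P.scalarObj z t := by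
  obtain ⟨w, hw, hJw⟩ := h.exists_feasible_J_le hd
  exact (hx.2 w hw).trans hJw

theorem ShorFeasible.scalarFeasible (h : P.ShorFeasible x X) : P.ScalarFeasible x X.trace := by
  have htrace : 0 ≤ (X - vecMulVec x x).trace := h.2.2.trace_nonneg
  rw [trace_sub, trace_vecMulVec, sub_nonneg] at htrace
  exact ⟨h.2.1, htrace⟩

theorem DiagFeasible.scalarFeasible (h : P.DiagFeasible x y) : P.ScalarFeasible x (∑ i, y i) := by
  refine ⟨h.1, ?_⟩
  rw [← sum_sq_eq_dotProduct_self]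
  exact Finset.sum_le_sum fun i _ => sub_nonpos.mp (h.2 i)

theorem Feasible.shorFeasible (hx : P.Feasible x) : P.ShorFeasible x (vecMulVec x x) := by
  refine ⟨transpose_vecMulVec x x, fun k => ?_, ?_⟩
  · rw [trace_vecMulVec]
    exact hx k
  · rw [sub_self]
    exact .zero

theorem Feasible.diagFeasible (hx : P.Feasible x) : P.DiagFeasible x (fun i => x i ^ 2) := by
  refine ⟨fun k => ?_, fun i => (sub_self _).le⟩
  rw [sum_sq_eq_dotProduct_self]
  exact hx k

theorem shorObj_vecMulVec_self (P : SQCQP n m) (x : Fin n → ℝ) :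
    P.shorObj x (vecMulVec x x) = P.J x := by
  rw [shorObj, trace_vecMulVec, J]

theorem diagObj_sq (P : SQCQP n m) (x : Fin n → ℝ) : P.diagObj x (fun i => x i ^ 2) = P.J x := by
  rw [diagObj, sum_sq_eq_dotProduct_self, J]

theorem IsGlobalMinimizer.isShorMinimizer (hx : P.IsGlobalMinimizer x)
    (hd : P.IsLinearDescent d) : P.IsShorMinimizer x (vecMulVec x x) :=
  ⟨hx.1.shorFeasible, fun _ _ hZ =>
    (P.shorObj_vecMulVec_self x).trans_le (hx.J_le_scalarObj hd hZ.scalarFeasible)⟩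

theorem IsGlobalMinimizer.isDiagMinimizer (hx : P.IsGlobalMinimizer x)
    (hd : P.IsLinearDescent d) : P.IsDiagMinimizer x (fun i => x i ^ 2) :=
  ⟨hx.1.diagFeasible, fun _ _ hw =>
    (P.diagObj_sq x).trans_le (hx.J_le_scalarObj hd hw.scalarFeasible)⟩

theorem IsShorMinimizer.isLeast_shorValues (h : P.IsShorMinimizer x X) :
    IsLeast P.shorValues (P.shorObj x X) := by
  refine ⟨⟨x, X, h.1, rfl⟩, ?_⟩
  rintro _ ⟨z, Z, hZ, rfl⟩
  exact h.2 z Z hZ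

theorem IsDiagMinimizer.isLeast_diagValues (h : P.IsDiagMinimizer x y) :
    IsLeast P.diagValues (P.diagObj x y) := by
  refine ⟨⟨x, y, h.1, rfl⟩, ?_⟩
  rintro _ ⟨z, w, hw, rfl⟩
  exact h.2 z w hw

end SQCQP

theorem stmt_9_general (n m : ℕ) (hmn : m < n) (P : SQCQP n m)
    (xstar : Fin n → ℝ) (hmin : P.IsGlobalMinimizer xstar) :
    (IsGLB P.shorValues (P.J xstar) ∧ sInf P.shorValues = P.J xstar ∧
      P.IsShorMinimizer xstar (vecMulVec xstar xstar)) ∧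
    (IsGLB P.diagValues (P.J xstar) ∧ sInf P.diagValues = P.J xstar ∧
      P.IsDiagMinimizer xstar (fun i => xstar i ^ 2)) := by
  obtain ⟨d, hd⟩ := P.exists_isLinearDescent hmn
  have shor_min := hmin.isShorMinimizer hd
  have diag_min := hmin.isDiagMinimizer hd
  have shor_least : IsLeast P.shorValues (P.J xstar) :=
    P.shorObj_vecMulVec_self xstar ▸ shor_min.isLeast_shorValues
  have diag_least : IsLeast P.diagValues (P.J xstar) :=
    P.diagObj_sq xstar ▸ diag_min.isLeast_diagValues
  exact ⟨⟨shor_least.isGLB, shor_least.csInf_eq, shor_min⟩,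
    ⟨diag_least.isGLB, diag_least.csInf_eq, diag_min⟩⟩

theorem stmt_9 (n m : ℕ) (hmn : m + 1 < n) (P : SQCQP n m)
    (hγ : ∃ γ : Fin m → ℝ, (∀ k, 0 ≤ γ k) ∧ γ ≠ 0 ∧ 0 ≤ P.aJ + ∑ k, γ k * P.a k)
    (xstar : Fin n → ℝ) (hmin : P.IsGlobalMinimizer xstar)
    (hslater : ∃ x₀ : Fin n → ℝ, ∀ k, P.f k x₀ < 0) :
    (IsGLB P.shorValues (P.J xstar) ∧ sInf P.shorValues = P.J xstar ∧
      P.IsShorMinimizer xstar (vecMulVec xstar xstar)) ∧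
    (IsGLB P.diagValues (P.J xstar) ∧ sInf P.diagValues = P.J xstar ∧
      P.IsDiagMinimizer xstar (fun i => xstar i ^ 2)) :=
  stmt_9_general n m (m.lt_succ_self.trans hmn) P xstar hmin
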